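/- For every integer s ≥ 2 there exist constants ε > 0 and δ > 0 such that the following holds. Let n ≥ 5 be an integer, let P = (f_1,…,f_n) be a non-trivial protocol on C_n with s colours and let X be uniformly distributed on Fix(P). For any index j, if f_{j+2} is not semi-perfect or the pair (X_{j+1}, X_{j+3}) is not (s², ε)-uniform, then H_j^{j+4} ≤ 5 − δ. -/

import Mathlib

open Finset

/-- Base-`s` Shannon entropy of the random variable `g(X)` where `X` is uniformly
distributed on the finite set `F`. -/
noncomputable def entOf (s : ℕ) {α β : Type} [DecidableEq β] [Fintype β]
    (F : Finset α) (g : α → β) : ℝ :=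
  -∑ y : β, (((F.filter fun c => g c = y).card : ℝ) / (F.card : ℝ)) *
      Real.logb s (((F.filter fun c => g c = y).card : ℝ) / (F.card : ℝ))

/-- The fixed set of a protocol `f` on the cycle `C_n` with `s` colours:
all colourings `c` with `c i = f i (c (i-1), c (i+1))` for every vertex `i`
(vertex indices taken modulo `n`). -/
def cycleFix (n s : ℕ) [NeZero n] (f : ZMod n → Fin s × Fin s → Fin s) :
    Finset (ZMod n → Fin s) :=
  Finset.univ.filter fun c => ∀ i, c i = f i (c (i - 1), c (i + 1))

/-- `h(i₁,…,i_k)`: entropy (base `s`) of the tuple of coordinates of `X ∈_u F`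
indexed by the set `T` of integers (interpreted modulo `n`). -/
noncomputable def entT (n s : ℕ) [NeZero n] (F : Finset (ZMod n → Fin s))
    (T : Finset ℤ) : ℝ :=
  entOf s F (fun c => fun i : {x // x ∈ T} => c ((i.1 : ℤ) : ZMod n))

/-- `H_j^k = h(j,j+1,…,k-1) + h(j+1,j+2,…,k)`. -/
noncomputable def entH (n s : ℕ) [NeZero n] (F : Finset (ZMod n → Fin s))
    (j k : ℤ) : ℝ :=
  entT n s F (Finset.Icc j (k - 1)) + entT n s F (Finset.Icc (j + 1) k)

/-- Base-`s` Shannon entropy of `g(U)` where `U` is distributed on the finite type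
`α` with probability mass function `q`. -/
noncomputable def pEnt (s : ℕ) {α β : Type} [Fintype α] [DecidableEq β] [Fintype β]
    (q : α → ℝ) (g : α → β) : ℝ :=
  -∑ y : β, (∑ x ∈ Finset.univ.filter fun x => g x = y, q x) *
      Real.logb s (∑ x ∈ Finset.univ.filter fun x => g x = y, q x)

/-- The conditional mutual information `I(U₁; U₂ | f(U))` (base `s`), where the pair
`U = (U₁, U₂)` has joint probability mass function `q` on `Z_s × Z_s`, computed via
`I(A;B|C) = H(A,C) + H(B,C) − H(A,B,C) − H(C)`. -/
noncomputable def condMI (s : ℕ) (f : Fin s × Fin s → Fin s)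
    (q : Fin s × Fin s → ℝ) : ℝ :=
  pEnt s q (fun u => (u.1, f u)) + pEnt s q (fun u => (u.2, f u))
    - pEnt s q (fun u => (u.1, u.2, f u)) - pEnt s q f

/-- The uniform probability mass function on `Z_s × Z_s`. -/
noncomputable def unifPair (s : ℕ) : Fin s × Fin s → ℝ := fun _ => 1 / (s ^ 2 : ℝ)

/-- A function `f : Z_s × Z_s → Z_s` is flat if every fibre has exactly `s` elements. -/
def IsFlat (s : ℕ) (f : Fin s × Fin s → Fin s) : Prop :=
  ∀ z : Fin s, (Finset.univ.filter fun u => f u = z).card = s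

/-- A function `f : Z_s × Z_s → Z_s` is semi-perfect if it is flat and, for
`U = (U₁,U₂)` uniform on `Z_s × Z_s`, `I(U₁; U₂ | f(U)) = 0`. -/
def IsSemiPerfect (s : ℕ) (f : Fin s × Fin s → Fin s) : Prop :=
  IsFlat s f ∧ condMI s f (unifPair s) = 0

/-- The pair `(X_a, X_b)` of coordinates of `X ∈_u F` is `(s², ε)`-uniform, i.e. each
value in `Z_s × Z_s` has probability within `ε` of `1/s²`. -/
def pairUnif (n s : ℕ) [NeZero n] (F : Finset (ZMod n → Fin s))
    (a b : ZMod n) (ε : ℝ) : Prop :=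
  ∀ z : Fin s × Fin s,
    |((F.filter fun c => (c a, c b) = z).card : ℝ) / (F.card : ℝ)
      - 1 / (s ^ 2 : ℝ)| ≤ ε


noncomputable def xMass {α β : Type} [Fintype α] [DecidableEq β] (w : α → ℝ) (g : α → β) (y : β) : ℝ :=
  ∑ x ∈ Finset.univ.filter fun x => g x = y, w x

noncomputable def xEnt {α β : Type} [Fintype α] [DecidableEq β] [Fintype β]
    (w : α → ℝ) (g : α → β) : ℝ := ∑ y, Real.negMulLog (xMass w g y)

lemma xEnt_eq {α β : Type} [Fintype α] [DecidableEq β] [Fintype β]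
    (w : α → ℝ) (g : α → β) :
    xEnt w g = ∑ x, -(w x * Real.log (xMass w g (g x))) := by
  unfold xEnt
  rw [← Finset.sum_fiberwise Finset.univ g]
  refine Finset.sum_congr rfl fun y _ => ?_
  have : ∀ x ∈ Finset.univ.filter (fun x => g x = y),
      -(w x * Real.log (xMass w g (g x))) = w x * (- Real.log (xMass w g y)) := by
    intro x hx
    rw [(Finset.mem_filter.mp hx).2]; ring
  rw [Finset.sum_congr rfl this, ← Finset.sum_mul, Real.negMulLog]
  change -(xMass w g y) * _ = xMass w g y * _
  ring

lemma xEnt_congr {α β γ : Type} [Fintype α] [DecidableEq β] [Fintype β]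
    [DecidableEq γ] [Fintype γ] (w : α → ℝ) (g : α → β) (g' : α → γ)
    (h : ∀ x x', g x = g x' ↔ g' x = g' x') : xEnt w g = xEnt w g' := by
  rw [xEnt_eq, xEnt_eq]
  refine Finset.sum_congr rfl fun x _ => ?_
  have : xMass w g (g x) = xMass w g' (g' x) := by
    unfold xMass
    exact Finset.sum_congr (by ext x'; simp [h]) fun _ _ => rfl
  rw [this]

lemma xMass_nonneg {α β : Type} [Fintype α] [DecidableEq β] {w : α → ℝ} (hw : ∀ x, 0 ≤ w x)
    (g : α → β) (y : β) : 0 ≤ xMass w g y := Finset.sum_nonneg fun x _ => hw x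

lemma xMass_ge {α β : Type} [Fintype α] [DecidableEq β] {w : α → ℝ} (hw : ∀ x, 0 ≤ w x)
    (g : α → β) (x : α) : w x ≤ xMass w g (g x) :=
  Finset.single_le_sum (f := w) (fun x _ => hw x) (by simp)

lemma xMass_sum {α β : Type} [Fintype α] [DecidableEq β] [Fintype β] (w : α → ℝ) 
    (g : α → β) : ∑ y, xMass w g y = ∑ x, w x := by
  unfold xMass; exact Finset.sum_fiberwise Finset.univ g w

lemma xMass_push {α β γ : Type} [Fintype α] [DecidableEq β] [Fintype β] [DecidableEq γ]
    (w : α → ℝ) (p : α → β) (g : β → γ) (z : γ) :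
    xMass (xMass w p) g z = xMass w (fun x => g (p x)) z := by
  unfold xMass
  rw [← Finset.sum_fiberwise (Finset.univ.filter fun x => g (p x) = z) p, Finset.sum_filter]
  refine Finset.sum_congr rfl fun y _ => ?_
  rw [Finset.filter_filter]
  split_ifs with h
  · refine Finset.sum_congr ?_ fun _ _ => rfl
    ext x; simp only [Finset.mem_filter, Finset.mem_univ, true_and]
    constructor
    · rintro rfl; exact ⟨h, rfl⟩
    · exact fun h => h.2
  · symm
    refine Finset.sum_eq_zero fun x hx => ?_
    simp only [Finset.mem_filter, Finset.mem_univ, true_and] at hx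
    exact absurd (hx.2 ▸ hx.1) h

lemma xEnt_push {α β γ : Type} [Fintype α] [DecidableEq β] [Fintype β] [DecidableEq γ] [Fintype γ]
    (w : α → ℝ) (p : α → β) (g : β → γ) :
    xEnt (xMass w p) g = xEnt w (fun x => g (p x)) := by
  unfold xEnt; simp only [xMass_push]

lemma xMass_fst {α β γ : Type} [Fintype α] [DecidableEq β] [Fintype β] [DecidableEq γ] 
    (w : α → ℝ) (X : α → β) (Z : α → γ) (z : γ) :
    ∑ x, xMass w (fun a => (X a, Z a)) (x, z) = xMass w Z z := by
  unfold xMass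
  rw [← Finset.sum_fiberwise (Finset.univ.filter fun x => Z x = z) X]
  refine Finset.sum_congr rfl fun y _ => ?_
  rw [Finset.filter_filter]
  refine Finset.sum_congr ?_ fun _ _ => rfl
  ext x; simp [and_comm]

lemma xEnt_submod {α β γ ζ : Type} [Fintype α] [DecidableEq β] [Fintype β]
    [DecidableEq γ] [Fintype γ] [DecidableEq ζ] [Fintype ζ] {w : α → ℝ} (hw : ∀ x, 0 ≤ w x)
    (X : α → β) (Y : α → γ) (Z : α → ζ) :
    xEnt w (fun a => (X a, Y a, Z a)) + xEnt w Z
      ≤ xEnt w (fun a => (X a, Z a)) + xEnt w (fun a => (Y a, Z a)) := by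
  set XYZ := fun a => (X a, Y a, Z a) with hXYZ
  set XZ := fun a => (X a, Z a) with hXZ
  set YZ := fun a => (Y a, Z a) with hYZ
  let r : β × γ × ζ → ℝ := fun t => xMass w XZ (t.1, t.2.2) * xMass w YZ (t.2.1, t.2.2)
    / (xMass w XYZ t * xMass w Z t.2.2)
  have key : ∑ a, w a * r (XYZ a) ≤ ∑ a, w a := by
    rw [← Finset.sum_fiberwise Finset.univ XYZ, ← xMass_sum w Z]
    have h1 : ∀ t, ∑ a ∈ Finset.univ.filter (fun a => XYZ a = t), w a * r (XYZ a)
        ≤ xMass w XZ (t.1, t.2.2) * (xMass w YZ (t.2.1, t.2.2) / xMass w Z t.2.2) := by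
      intro t
      have : ∑ a ∈ Finset.univ.filter (fun a => XYZ a = t), w a * r (XYZ a)
          = xMass w XYZ t * r t := by
        unfold xMass
        rw [Finset.sum_mul]
        refine Finset.sum_congr rfl fun a ha => ?_
        rw [(Finset.mem_filter.mp ha).2]
      rw [this]
      have n1 := xMass_nonneg hw XZ (t.1, t.2.2)
      have n2 := xMass_nonneg hw YZ (t.2.1, t.2.2)
      have n3 := xMass_nonneg hw Z t.2.2
      rcases eq_or_ne (xMass w XYZ t) 0 with h | h
      · rw [h, zero_mul]; positivity
      · apply le_of_eq
        simp only [r]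
        rcases eq_or_ne (xMass w Z t.2.2) 0 with h' | h'
        · simp [h']
        · field_simp
    refine (Finset.sum_le_sum fun t _ => h1 t).trans ?_
    rw [Fintype.sum_prod_type]
    simp only [Fintype.sum_prod_type]
    calc ∑ x, ∑ y, ∑ z, xMass w XZ (x, z) * (xMass w YZ (y, z) / xMass w Z z)
        = ∑ z, (∑ x, xMass w XZ (x, z)) * ((∑ y, xMass w YZ (y, z)) / xMass w Z z) := by
          simp only [Finset.sum_div, Finset.sum_mul_sum]
          symm
          rw [Finset.sum_comm]
          exact Finset.sum_congr rfl fun x _ => Finset.sum_comm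
      _ ≤ ∑ z, xMass w Z z := by
          refine Finset.sum_le_sum fun z _ => ?_
          rw [xMass_fst w X Z, xMass_fst w Y Z]
          have n3 := xMass_nonneg hw Z z
          rcases eq_or_ne (xMass w Z z) 0 with h' | h'
          · simp [h']
          · rw [div_self h', mul_one]
  rw [xEnt_eq, xEnt_eq, xEnt_eq, xEnt_eq, ← Finset.sum_add_distrib, ← Finset.sum_add_distrib]
  have h2 : ∀ a, -(w a * Real.log (xMass w XYZ (XYZ a))) + -(w a * Real.log (xMass w Z (Z a)))
      ≤ -(w a * Real.log (xMass w XZ (XZ a))) + -(w a * Real.log (xMass w YZ (YZ a)))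
        + (w a * r (XYZ a) - w a) := by
    intro a
    rcases (hw a).eq_or_lt with h | h
    · simp [← h]
    · have p1 := h.trans_le (xMass_ge hw XYZ a)
      have p2 := h.trans_le (xMass_ge hw Z a)
      have p3 := h.trans_le (xMass_ge hw XZ a)
      have p4 := h.trans_le (xMass_ge hw YZ a)
      have hr : r (XYZ a) = xMass w XZ (XZ a) * xMass w YZ (YZ a)
        / (xMass w XYZ (XYZ a) * xMass w Z (Z a)) := rfl
      have hl := Real.log_le_sub_one_of_pos (x := r (XYZ a)) (by rw [hr]; positivity)
      have hl2 : Real.log (r (XYZ a)) = Real.log (xMass w XZ (XZ a)) + Real.log (xMass w YZ (YZ a))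
          - (Real.log (xMass w XYZ (XYZ a)) + Real.log (xMass w Z (Z a))) := by
        rw [hr, Real.log_div (by positivity) (by positivity), Real.log_mul p3.ne' p4.ne',
          Real.log_mul p1.ne' p2.ne']
      have := mul_le_mul_of_nonneg_left hl h.le
      rw [hl2] at this
      linarith
  have h3 := Finset.sum_le_sum fun a (_ : a ∈ (Finset.univ : Finset α)) => h2 a
  rw [Finset.sum_add_distrib (g := fun a => w a * r (XYZ a) - w a), Finset.sum_sub_distrib] at h3
  linarith

lemma negMulLog_le_aux {k p : ℝ} (hk : 0 < k) (hp : 0 ≤ p) :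
    Real.negMulLog p ≤ p * Real.log k + (1 / k - p) ∧
    (Real.negMulLog p = p * Real.log k + (1 / k - p) → p = 1 / k) := by
  rcases hp.eq_or_lt with h | h
  · subst h
    simp [hk.le]
  · have hlog : Real.log (1 / (k * p)) = - (Real.log k + Real.log p) := by
      rw [one_div, Real.log_inv, Real.log_mul hk.ne' h.ne']
    have e : p * (1 / (k * p) - 1) = 1 / k - p := by field_simp
    have hl := Real.log_le_sub_one_of_pos (x := 1 / (k * p)) (by positivity)
    rw [hlog] at hl
    unfold Real.negMulLog
    refine ⟨by nlinarith [mul_le_mul_of_nonneg_left hl h.le], fun he => ?_⟩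
    by_contra hne
    have hne' : 1 / (k * p) ≠ 1 := by
      intro h1
      apply hne
      field_simp at h1 ⊢
      linarith
    have hl := Real.log_lt_sub_one_of_pos (x := 1 / (k * p)) (by positivity) hne'
    rw [hlog] at hl
    nlinarith [mul_lt_mul_of_pos_left hl h]

lemma xEnt_max {α β : Type} [Fintype α] [DecidableEq β] [Fintype β] [Nonempty β]
    {w : α → ℝ} (hw : ∀ x, 0 ≤ w x) (h1 : ∑ x, w x = 1) (g : α → β) :
    xEnt w g ≤ Real.log (Fintype.card β) ∧
    (xEnt w g = Real.log (Fintype.card β) → ∀ y, xMass w g y = 1 / Fintype.card β) := by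
  have hk : (0:ℝ) < Fintype.card β := by exact_mod_cast Fintype.card_pos
  have hs : ∑ y, (xMass w g y * Real.log (Fintype.card β) + (1 / (Fintype.card β : ℝ) - xMass w g y))
      = Real.log (Fintype.card β) := by
    rw [Finset.sum_add_distrib, Finset.sum_sub_distrib, ← Finset.sum_mul, xMass_sum, h1]
    simp [hk.ne']
  have hle := fun y (_ : y ∈ (Finset.univ : Finset β)) =>
    (negMulLog_le_aux hk (xMass_nonneg hw g y)).1
  refine ⟨(Finset.sum_le_sum hle).trans hs.le, fun he y => ?_⟩
  rw [← hs] at he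
  exact (negMulLog_le_aux hk (xMass_nonneg hw g y)).2
    ((Finset.sum_eq_sum_iff_of_le hle).1 he y (Finset.mem_univ y))

lemma xEnt_cont {α β : Type} [Fintype α] [DecidableEq β] [Fintype β] (g : α → β) :
    Continuous fun w : α → ℝ => xEnt w g := by
  unfold xEnt xMass
  refine continuous_finsetSum _ fun y _ => Real.continuous_negMulLog.comp ?_
  fun_prop

lemma pEnt_eq (s : ℕ) {α β : Type} [Fintype α] [DecidableEq β] [Fintype β]
    (q : α → ℝ) (g : α → β) : pEnt s q g = xEnt q g / Real.log s := by
  unfold pEnt xEnt xMass Real.negMulLog Real.logb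
  rw [Finset.sum_div, ← Finset.sum_neg_distrib]
  exact Finset.sum_congr rfl fun _ _ => by ring

lemma xMass_unif {α β : Type} [DecidableEq β]
    (F : Finset α) (g : α → β) (y : β) :
    xMass (fun _ : F => 1 / (F.card : ℝ)) (fun c : F => g c) y
      = ((F.filter fun c => g c = y).card : ℝ) / F.card := by
  unfold xMass
  rw [Finset.sum_const, nsmul_eq_mul, mul_one_div]
  congr 2
  rw [← Finset.card_map (Function.Embedding.subtype _)]
  congr 1
  ext x; simp [and_comm]

lemma entOf_eq (s : ℕ) {α β : Type} [DecidableEq β] [Fintype β]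
    (F : Finset α) (g : α → β) :
    entOf s F g = xEnt (fun _ : F => 1 / (F.card : ℝ)) (fun c : F => g c) / Real.log s := by
  unfold entOf xEnt Real.negMulLog Real.logb
  rw [Finset.sum_div, ← Finset.sum_neg_distrib]
  refine Finset.sum_congr rfl fun y _ => ?_
  rw [xMass_unif]; ring

noncomputable def xPsi (s : ℕ) (f : Fin s × Fin s → Fin s) (q : Fin s × Fin s → ℝ) : ℝ :=
  2 * xEnt q f + 2 * xEnt q (fun u => (u.1, u.2, f u)) - xEnt q (fun u => (u.1, f u))
    - xEnt q (fun u => (u.2, f u))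

lemma xEnt_trip (s : ℕ) (f : Fin s × Fin s → Fin s) (q : Fin s × Fin s → ℝ) :
    xEnt q (fun u => (u.1, u.2, f u)) = xEnt q id := by
  refine xEnt_congr _ _ _ fun x x' => ⟨fun h => ?_, fun h => ?_⟩
  · simp only [Prod.mk.injEq] at h
    exact Prod.ext h.1 h.2.1
  · have : x = x' := h
    rw [this]

lemma xMass_id {α : Type} [Fintype α] [DecidableEq α] (q : α → ℝ) (z : α) :
    xMass q id z = q z := by
  simp [xMass, Finset.sum_filter]

lemma xPsi_lt (s : ℕ) (hs : 2 ≤ s) (f : Fin s × Fin s → Fin s) (q : Fin s × Fin s → ℝ)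
    (hq : ∀ x, 0 ≤ q x) (h1 : ∑ x, q x = 1)
    (h : ¬ IsSemiPerfect s f ∨ ∃ z, q z ≠ 1 / (s ^ 2 : ℝ)) :
    xPsi s f q < 3 * Real.log s := by
  haveI : Nonempty (Fin s) := ⟨⟨0, by omega⟩⟩
  have hs0 : (s : ℝ) ≠ 0 := by positivity
  have hls : 0 < Real.log s := Real.log_pos (by exact_mod_cast hs)
  by_contra hcon
  push Not at hcon
  obtain ⟨m1, m1'⟩ := xEnt_max hq h1 f
  obtain ⟨m2, m2'⟩ := xEnt_max hq h1 (id : Fin s × Fin s → _)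
  have sub := xEnt_submod hq Prod.fst Prod.snd f
  have ht := xEnt_trip s f q
  unfold xPsi at hcon
  have hc : Real.log (Fintype.card (Fin s × Fin s) : ℕ) = 2 * Real.log s := by
    rw [Fintype.card_prod, Fintype.card_fin]
    push_cast
    rw [Real.log_mul hs0 hs0]; ring
  rw [Fintype.card_fin] at m1 m1'
  rw [hc] at m2 m2'
  have e1 : xEnt q f = Real.log s := by linarith
  have e2 : xEnt q id = 2 * Real.log s := by linarith
  have hu : ∀ z, q z = 1 / (s ^ 2 : ℝ) := by
    intro z
    have := m2' e2 z
    rw [xMass_id] at this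
    rw [this, Fintype.card_prod, Fintype.card_fin]; push_cast; ring
  have hqu : q = unifPair s := funext hu
  rcases h with h | ⟨z, hz⟩
  · apply h
    refine ⟨fun z => ?_, ?_⟩
    · have := m1' e1 z
      unfold xMass at this
      simp only [hu, Finset.sum_const, nsmul_eq_mul] at this
      have h2 : ((Finset.univ.filter fun u => f u = z).card : ℝ) = s := by
        field_simp at this
        exact this
      exact_mod_cast h2
    · rw [← hqu]
      unfold condMI
      rw [pEnt_eq, pEnt_eq, pEnt_eq, pEnt_eq, ← add_div, ← sub_div, ← sub_div]
      rw [div_eq_zero_iff]; left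
      linarith
  · exact hz (hu z)

lemma xPsi_gap (s : ℕ) (hs : 2 ≤ s) (ε : ℝ) (hε : 0 < ε) (f : Fin s × Fin s → Fin s) :
    ∃ δ : ℝ, 0 < δ ∧ ∀ q : Fin s × Fin s → ℝ, (∀ x, 0 ≤ q x) → ∑ x, q x = 1 →
      (¬ IsSemiPerfect s f ∨ ∃ z, ε ≤ |q z - 1 / (s ^ 2 : ℝ)|) →
      xPsi s f q ≤ 3 * Real.log s - δ := by
  let K : Set (Fin s × Fin s → ℝ) := stdSimplex ℝ (Fin s × Fin s) ∩
    {q | ¬ IsSemiPerfect s f ∨ ∃ z, ε ≤ |q z - 1 / (s ^ 2 : ℝ)|}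
  have hK : IsCompact K := by
    refine (isCompact_stdSimplex ℝ (Fin s × Fin s)).inter_right ?_
    rw [Set.setOf_or]
    refine isClosed_const.union ?_
    rw [Set.setOf_exists]
    refine isClosed_iUnion_of_finite fun z => ?_
    exact isClosed_le continuous_const (by fun_prop)
  have hcont : Continuous (xPsi s f) := by
    unfold xPsi
    have c1 := xEnt_cont f
    have c2 := xEnt_cont (fun u : Fin s × Fin s => (u.1, u.2, f u))
    have c3 := xEnt_cont (fun u : Fin s × Fin s => (u.1, f u))
    have c4 := xEnt_cont (fun u : Fin s × Fin s => (u.2, f u))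
    exact (((continuous_const.mul c1).add (continuous_const.mul c2)).sub c3).sub c4
  rcases K.eq_empty_or_nonempty with hE | hN
  · refine ⟨1, one_pos, fun q h0 h1 h2 => ?_⟩
    have : q ∈ K := ⟨⟨h0, h1⟩, h2⟩
    rw [hE] at this
    exact this.elim
  · obtain ⟨q0, hq0, hmax⟩ := hK.exists_isMaxOn hN hcont.continuousOn
    have hlt := xPsi_lt s hs f q0 hq0.1.1 hq0.1.2 (hq0.2.imp id fun ⟨z, hz⟩ => ⟨z, fun h => by
      rw [h, sub_self, abs_zero] at hz; linarith⟩)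
    refine ⟨3 * Real.log s - xPsi s f q0, by linarith, fun q h0 h1 h2 => ?_⟩
    have : xPsi s f q ≤ xPsi s f q0 := hmax (show q ∈ K from ⟨⟨h0, h1⟩, h2⟩)
    linarith

/-- The entropy inequality: `X = (A,B,C,D,E)`. -/
lemma xEnt_main {α : Type} [Fintype α] (s : ℕ) (hs : 2 ≤ s) {w : α → ℝ} (hw : ∀ x, 0 ≤ w x)
    (h1 : ∑ x, w x = 1) (A B C D E : α → Fin s) (f fB fD : Fin s × Fin s → Fin s)
    (hC : ∀ x, C x = f (B x, D x)) (hB : ∀ x, B x = fB (A x, C x))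
    (hD : ∀ x, D x = fD (C x, E x)) :
    xEnt w (fun x => (A x, B x, C x, D x)) + xEnt w (fun x => (B x, C x, D x, E x))
      ≤ 2 * Real.log s + xPsi s f (xMass w fun x => (B x, D x)) := by
  haveI : Nonempty (Fin s) := ⟨⟨0, by omega⟩⟩
  have ind : ∀ Y : α → Fin s, xEnt w (fun x => (Y x, C x)) ≤ Real.log s + xEnt w C := by
    intro Y
    have h := xEnt_submod hw Y C (fun _ => ())
    have m := (xEnt_max hw h1 Y).1
    have m0 : xEnt w (fun _ : α => ()) = 0 := by
      simp [xEnt, xMass, h1]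
    rw [Fintype.card_fin] at m
    rw [m0, xEnt_congr w (fun a => (Y a, C a, ())) (fun x => (Y x, C x)) (by simp),
      xEnt_congr w (fun a => (Y a, ())) Y (by simp),
      xEnt_congr w (fun a => (C a, ())) C (by simp)] at h
    linarith
  have iA := ind A
  have iE := ind E
  have s1 := xEnt_submod hw A D (fun x => (B x, C x))
  have s2 := xEnt_submod hw E B (fun x => (C x, D x))
  unfold xPsi
  simp only [xEnt_push, ← hC]
  rw [xEnt_congr w (fun a => (A a, D a, B a, C a)) (fun x => (A x, B x, C x, D x))
      (by intro x y; simp only [Prod.mk.injEq]; tauto),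
    xEnt_congr w (fun a => (A a, B a, C a)) (fun x => (A x, C x))
      (by intro x y; simp only [Prod.mk.injEq]
          exact ⟨fun h => ⟨h.1, h.2.2⟩, fun h => ⟨h.1, by rw [hB x, hB y, h.1, h.2], h.2⟩⟩),
    xEnt_congr w (fun a => (D a, B a, C a)) (fun x => (B x, D x, C x))
      (by intro x y; simp only [Prod.mk.injEq]; tauto)] at s1
  rw [xEnt_congr w (fun a => (E a, B a, C a, D a)) (fun x => (B x, C x, D x, E x))
      (by intro x y; simp only [Prod.mk.injEq]; tauto),
    xEnt_congr w (fun a => (E a, C a, D a)) (fun x => (E x, C x))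
      (by intro x y; simp only [Prod.mk.injEq]
          exact ⟨fun h => ⟨h.1, h.2.1⟩, fun h => ⟨h.1, h.2, by rw [hD x, hD y, h.1, h.2]⟩⟩),
    xEnt_congr w (fun a => (B a, C a, D a)) (fun x => (B x, D x, C x))
      (by intro x y; simp only [Prod.mk.injEq]; tauto),
    xEnt_congr w (fun a => (C a, D a)) (fun x => (D x, C x))
      (by intro x y; simp only [Prod.mk.injEq]; tauto)] at s2
  linarith

lemma entT_eq (n s : ℕ) [NeZero n] (F : Finset (ZMod n → Fin s)) (j k : ℤ) (hk : k = j + 3) :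
    entT n s F (Finset.Icc j k) = xEnt (fun _ : F => 1 / (F.card : ℝ))
      (fun c : F => (c.1 ((j : ℤ) : ZMod n), c.1 ((j + 1 : ℤ) : ZMod n),
        c.1 ((j + 2 : ℤ) : ZMod n), c.1 ((j + 3 : ℤ) : ZMod n))) / Real.log s := by
  subst hk
  unfold entT
  rw [entOf_eq]
  congr 1
  refine xEnt_congr _ _ _ fun c c' => ?_
  simp only [Prod.mk.injEq]
  constructor
  · intro h
    have h' : ∀ i : ℤ, i ∈ Finset.Icc j (j + 3) → c.1 (i : ZMod n) = c'.1 (i : ZMod n) :=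
      fun i hi => congrFun h ⟨i, hi⟩
    refine ⟨h' _ ?_, h' _ ?_, h' _ ?_, h' _ ?_⟩ <;> (rw [Finset.mem_Icc]; omega)
  · rintro ⟨h0, h1, h2, h3⟩
    funext ⟨i, hi⟩
    rw [Finset.mem_Icc] at hi
    have : i = j ∨ i = j + 1 ∨ i = j + 2 ∨ i = j + 3 := by omega
    rcases this with rfl | rfl | rfl | rfl <;> assumption

/-- The statement with the stronger quantifier order: every `ε > 0` works. -/
lemma cycle_guessing_aux (s : ℕ) (hs : 2 ≤ s) (ε : ℝ) (hε : 0 < ε) :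
    ∃ δ : ℝ, 0 < δ ∧
      ∀ (n : ℕ) [NeZero n], 5 ≤ n →
        ∀ f : ZMod n → Fin s × Fin s → Fin s, (cycleFix n s f).Nonempty →
          ∀ j : ℤ,
            (¬ IsSemiPerfect s (f ((j + 2 : ℤ) : ZMod n)) ∨
              ¬ pairUnif n s (cycleFix n s f)
                  ((j + 1 : ℤ) : ZMod n) ((j + 3 : ℤ) : ZMod n) ε) →
            entH n s (cycleFix n s f) j (j + 4) ≤ 5 - δ := by
  haveI : Nonempty (Fin s) := ⟨⟨0, by omega⟩⟩
  have hls : 0 < Real.log s := Real.log_pos (by exact_mod_cast hs)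
  choose d hd hd' using xPsi_gap s hs ε hε
  obtain ⟨f0, hf0⟩ := Finite.exists_min d
  refine ⟨d f0 / Real.log s, div_pos (hd f0) hls, ?_⟩
  intro n _ hn f hne j hj
  set F := cycleFix n s f with hF
  have hFc : (0 : ℝ) < F.card := by exact_mod_cast hne.card_pos
  have hfix : ∀ c : F, ∀ i, c.1 i = f i (c.1 (i - 1), c.1 (i + 1)) := fun c =>
    (Finset.mem_filter.mp c.2).2
  have hw : ∀ x : F, 0 ≤ (fun _ : F => 1 / (F.card : ℝ)) x := fun _ => by positivity
  have h1 : ∑ x : F, (fun _ : F => 1 / (F.card : ℝ)) x = 1 := by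
    simp [hFc.ne']
  have main := xEnt_main s hs hw h1 (fun c => c.1 ((j : ℤ) : ZMod n))
    (fun c => c.1 ((j + 1 : ℤ) : ZMod n)) (fun c => c.1 ((j + 2 : ℤ) : ZMod n))
    (fun c => c.1 ((j + 3 : ℤ) : ZMod n)) (fun c => c.1 ((j + 4 : ℤ) : ZMod n))
    (f ((j + 2 : ℤ) : ZMod n)) (f ((j + 1 : ℤ) : ZMod n)) (f ((j + 3 : ℤ) : ZMod n))
    (fun c => by
      have := hfix c ((j + 2 : ℤ) : ZMod n)
      rw [this]; congr 3 <;> (push_cast; ring))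
    (fun c => by
      have := hfix c ((j + 1 : ℤ) : ZMod n)
      rw [this]; congr 3 <;> (push_cast; ring))
    (fun c => by
      have := hfix c ((j + 3 : ℤ) : ZMod n)
      rw [this]; congr 3 <;> (push_cast; ring))
  have gap := hd' (f ((j + 2 : ℤ) : ZMod n)) (xMass (fun _ : F => 1 / (F.card : ℝ))
      fun c : F => (c.1 ((j + 1 : ℤ) : ZMod n), c.1 ((j + 3 : ℤ) : ZMod n)))
    (xMass_nonneg hw _) (by rw [xMass_sum, h1]) (hj.imp id fun h => by
      unfold pairUnif at h
      push Not at h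
      obtain ⟨z, hz⟩ := h
      refine ⟨z, ?_⟩
      rw [xMass_unif F (fun c => (c ((j + 1 : ℤ) : ZMod n), c ((j + 3 : ℤ) : ZMod n))) z]
      exact hz.le)
  have hmin := hf0 (f ((j + 2 : ℤ) : ZMod n))
  unfold entH
  rw [entT_eq n s F j (j + 4 - 1) (by ring), entT_eq n s F (j + 1) (j + 4) (by ring), ← add_div,
    div_le_iff₀ hls, sub_mul, div_mul_cancel₀ _ hls.ne']
  rw [show j + 1 + 1 = j + 2 by ring, show j + 1 + 2 = j + 3 by ring,
    show j + 1 + 3 = j + 4 by ring]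
  linarith

/-- For every integer `s ≥ 2` there are constants `ε > 0` and
`δ > 0` such that: for every `n ≥ 5`, every non-trivial protocol `P = (f_i)` on `C_n`
with `s` colours with `X` uniform on `Fix(P)`, and every index `j`, if `f_{j+2}` is
not semi-perfect or `(X_{j+1}, X_{j+3})` is not `(s², ε)`-uniform, then
`H_j^{j+4} ≤ 5 − δ`. -/
theorem cycle_guessing_stmt11 (s : ℕ) (hs : 2 ≤ s) :
    ∃ ε : ℝ, 0 < ε ∧ ∃ δ : ℝ, 0 < δ ∧
      ∀ (n : ℕ) [NeZero n], 5 ≤ n →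
        ∀ f : ZMod n → Fin s × Fin s → Fin s, (cycleFix n s f).Nonempty →
          ∀ j : ℤ,
            (¬ IsSemiPerfect s (f ((j + 2 : ℤ) : ZMod n)) ∨
              ¬ pairUnif n s (cycleFix n s f)
                  ((j + 1 : ℤ) : ZMod n) ((j + 3 : ℤ) : ZMod n) ε) →
            entH n s (cycleFix n s f) j (j + 4) ≤ 5 - δ := by
  exact ⟨1 / (2 * s ^ 2), by positivity, cycle_guessing_aux s hs _ (by positivity)⟩
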